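/- There exists N such that for all n ≥ N the following holds for D = {i : 1 ≤ i ≤ 2^{n+1} − 3, i odd}: (a) there is no irreducible solution U of length ℓ for D whose density s(U)/ℓ lies strictly between 1/n and 2/(2n−1); (b) the irreducible solutions of density exactly 2/(2n−1) (necessarily of weight 2 and length 2n−1) are exactly, up to shift, the following four solutions of length 2n−1: u_{2^n−3} = 2^{n−1}, u_{3·2^{n−1}−1} = 1 (all other u_d = 0); and, for each i ∈ {3, 5, 7}, u_{2^{n+1}−i} = 2^{n−2}, u_{i·2^{n−2}−1} = 1 (all other u_d = 0). (In each case ∑ d·u_d = 2^{2n−1} − 1.) -/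

import Mathlib

/-- The binary weight `s₂(m)`: the sum of the base-2 digits of `m`. -/
def s2 (m : ℕ) : ℕ := (Nat.digits 2 m).sum

/-- The shift map on `{0, …, 2^ℓ - 1}`: it fixes `2^ℓ - 1` and sends any other `i`
to the remainder of `2·i` modulo `2^ℓ - 1`. -/
def shift2 (ℓ i : ℕ) : ℕ := if i = 2 ^ ℓ - 1 then i else (2 * i) % (2 ^ ℓ - 1)

/-- `U : ℕ → ℕ` (supported on `D`) is a solution of length `ℓ` for `D`:
`0 ≤ u_d ≤ 2^ℓ - 1` and `∑ d·u_d` is a positive multiple of `2^ℓ - 1`. -/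
structure IsSolution (D : Finset ℕ) (ℓ : ℕ) (U : ℕ → ℕ) : Prop where
  len_pos : 1 ≤ ℓ
  bounded : ∀ d, U d ≤ 2 ^ ℓ - 1
  supp_sub : ∀ d, d ∉ D → U d = 0
  dvd : (2 ^ ℓ - 1) ∣ ∑ d ∈ D, d * U d
  pos : 0 < ∑ d ∈ D, d * U d

/-- The weight `s(U) = ∑_{d ∈ D} s₂(u_d)` of a solution. -/
def weight (D : Finset ℕ) (U : ℕ → ℕ) : ℕ := ∑ d ∈ D, s2 (U d)

/-- The support map `φ_U(k) = (∑_{d ∈ D} d·δ^k(u_d)) / (2^ℓ - 1)` of a solution,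
viewed as an `ℓ`-periodic function on `ℕ`. -/
def supportMap (D : Finset ℕ) (ℓ : ℕ) (U : ℕ → ℕ) (k : ℕ) : ℕ :=
  (∑ d ∈ D, d * (shift2 ℓ)^[k] (U d)) / (2 ^ ℓ - 1)

/-- A solution is irreducible when its support map is injective on `ℤ/ℓℤ`,
i.e. injective on `{0, …, ℓ-1}`. -/
def IrreducibleSol (D : Finset ℕ) (ℓ : ℕ) (U : ℕ → ℕ) : Prop :=
  Set.InjOn (supportMap D ℓ U) ↑(Finset.range ℓ)

/-- `U` is a shift of `V` (coordinatewise iterate of the shift map). -/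
def IsShiftOf (ℓ : ℕ) (U V : ℕ → ℕ) : Prop :=
  ∃ k, ∀ d, U d = (shift2 ℓ)^[k] (V d)

/-- The set of odd integers `1 ≤ i ≤ d`. -/
def oddUpTo (d : ℕ) : Finset ℕ := (Finset.range (d + 1)).filter (fun i => i % 2 = 1)

/-- `D = {i : 1 ≤ i ≤ 2^{n+1} - 3, i odd}`. -/
def oddD (n : ℕ) : Finset ℕ := oddUpTo (2 ^ (n + 1) - 3)

/-- The solution with `u_a = 1` and all other coordinates `0`. -/
def sol1 (a : ℕ) : ℕ → ℕ := fun d => if d = a then 1 else 0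

/-- The solution with `u_a = x`, `u_b = y` and all other coordinates `0`. -/
def sol2 (a x b y : ℕ) : ℕ → ℕ := fun d => if d = a then x else if d = b then y else 0

/-- The solution with `u_a = x`, `u_b = y`, `u_c = z` and all other coordinates `0`. -/
def sol3 (a x b y c z : ℕ) : ℕ → ℕ :=
  fun d => if d = a then x else if d = b then y else if d = c then z else 0

/-!
Write `x k` for the values of the support map. One step along the cycle doubles `x k` and subtracts
the sum of the `d ∈ D` whose coordinate overflows, and the total number of overflows is the weight
`w`. The function `potential n` grows by `1` when its argument is doubled, except for losses of `3`
at `1` and of `1` at `3`, while adding an odd number less than `2 ^ (n + 1)` raises it by at most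
`n - 2`. Summing around the cycle, which visits `1` and `3` at most once each if the solution is
irreducible, gives `ℓ ≤ (n - 2) * w + 4`. Together with `(2 * n - 1) * w ≤ 2 * ℓ` this forces
`w ≤ 2`; density greater than `1 / n` then leaves only `w = 2`, `ℓ = 2 * n - 1`, and a cycle that
visits `1`. Started there, the solution reads `a * 2 ^ t + b = 2 ^ (2 * n - 1) - 1` with `a`, `b`
odd and less than `2 ^ (n + 1)`, and this equation is solved directly.
-/

lemma eq_of_modEq_of_le {M a b : ℕ} (ha : a ≤ M) (hb : b ≤ M) (h0 : a = 0 ↔ b = 0)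
    (h : a ≡ b [MOD M]) : a = b := by
  rcases a with _ | a <;> rcases b with _ | b
  · rfl
  · simp at h0
  · simp at h0
  · rw [(Nat.ModEq.add_right_cancel' 1 h).eq_of_lt_of_lt ha hb]

section Shift

variable {ℓ u : ℕ}

lemma shift2_modEq (ℓ u : ℕ) : shift2 ℓ u ≡ 2 * u [MOD 2 ^ ℓ - 1] := by
  unfold shift2
  split_ifs with h
  · exact ((Nat.modEq_zero_iff_dvd.2 (h ▸ dvd_rfl)).trans
      (Nat.modEq_zero_iff_dvd.2 (h ▸ dvd_mul_left _ _)).symm)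
  · exact Nat.mod_modEq _ _

lemma shift2_le (hu : u ≤ 2 ^ ℓ - 1) : shift2 ℓ u ≤ 2 ^ ℓ - 1 := by
  unfold shift2
  split_ifs with h
  · exact hu
  · exact (Nat.mod_lt _ (by omega)).le

lemma shift2_add_ite (hℓ : 1 ≤ ℓ) (hu : u ≤ 2 ^ ℓ - 1) :
    shift2 ℓ u + (if 2 ^ (ℓ - 1) ≤ u then 2 ^ ℓ - 1 else 0) = 2 * u := by
  have hpow : 2 ^ ℓ = 2 * 2 ^ (ℓ - 1) := (mul_pow_sub_one (by omega) 2).symm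
  have hpos : 0 < 2 ^ (ℓ - 1) := by positivity
  unfold shift2
  split_ifs with h1 h2 h2
  · omega
  · omega
  · rw [Nat.mod_eq_sub_mod (by omega), Nat.mod_eq_of_lt (by omega)]
    omega
  · rw [Nat.mod_eq_of_lt (by omega), add_zero]

lemma shift2_eq_zero_iff (hu : u ≤ 2 ^ ℓ - 1) : shift2 ℓ u = 0 ↔ u = 0 := by
  rcases ℓ.eq_zero_or_pos with rfl | hℓ
  · simp_all [shift2]
  · have hpow : 2 ^ ℓ = 2 * 2 ^ (ℓ - 1) := (mul_pow_sub_one (by omega) 2).symm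
    have := shift2_add_ite hℓ hu
    split_ifs at this <;> omega

lemma shift2_iterate_le (hu : u ≤ 2 ^ ℓ - 1) (k : ℕ) : (shift2 ℓ)^[k] u ≤ 2 ^ ℓ - 1 :=
  Set.MapsTo.iterate (s := Set.Iic (2 ^ ℓ - 1)) (f := shift2 ℓ) (fun _ => shift2_le) k hu

lemma shift2_iterate_modEq (ℓ u k : ℕ) : (shift2 ℓ)^[k] u ≡ 2 ^ k * u [MOD 2 ^ ℓ - 1] := by
  induction k with
  | zero => simpa using Nat.ModEq.refl u
  | succ k ih =>
    rw [Function.iterate_succ_apply', pow_succ', mul_assoc]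
    exact (shift2_modEq ℓ _).trans (ih.mul_left 2)

lemma shift2_iterate_eq_zero_iff (hu : u ≤ 2 ^ ℓ - 1) (k : ℕ) :
    (shift2 ℓ)^[k] u = 0 ↔ u = 0 := by
  induction k with
  | zero => rfl
  | succ k ih =>
    rw [Function.iterate_succ_apply', shift2_eq_zero_iff (shift2_iterate_le hu k), ih]

lemma shift2_iterate_zero (ℓ k : ℕ) : (shift2 ℓ)^[k] 0 = 0 :=
  (shift2_iterate_eq_zero_iff (Nat.zero_le _) k).2 rfl

lemma shift2_iterate_mul_add {q r j k : ℕ} (hq : q < 2 ^ k) (hr : r < 2 ^ j) :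
    (shift2 (k + j))^[k] (q * 2 ^ j + r) = r * 2 ^ k + q := by
  have hpow : 2 ^ (k + j) = 2 ^ k * 2 ^ j := pow_add ..
  have hqr : q * 2 ^ j + r < 2 ^ (k + j) := by
    rw [hpow]; nlinarith
  have hrq : r * 2 ^ k + q < 2 ^ (k + j) := by
    rw [hpow]; nlinarith
  refine eq_of_modEq_of_le (shift2_iterate_le (by omega) k) (by omega) ?_ ?_
  · rw [shift2_iterate_eq_zero_iff (by omega)]
    simp [and_comm]
  · refine (shift2_iterate_modEq (k + j) _ k).trans ?_
    have hone : 2 ^ (k + j) ≡ 1 [MOD 2 ^ (k + j) - 1] :=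
      ((Nat.modEq_iff_dvd' Nat.one_le_two_pow).2 dvd_rfl).symm
    calc 2 ^ k * (q * 2 ^ j + r) = q * 2 ^ (k + j) + r * 2 ^ k := by rw [hpow]; ring
      _ ≡ q * 1 + r * 2 ^ k [MOD 2 ^ (k + j) - 1] := (hone.mul_left q).add_right _
      _ = r * 2 ^ k + q := by ring

lemma shift2_iterate_self (hu : u ≤ 2 ^ ℓ - 1) : (shift2 ℓ)^[ℓ] u = u := by
  have hpos : 0 < 2 ^ ℓ := by positivity
  simpa using shift2_iterate_mul_add (k := ℓ) (j := 0) (q := u) (r := 0) (by omega) (by simp)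

lemma shift2_iterate_two_pow {e k : ℕ} (h : e + k < ℓ) : (shift2 ℓ)^[k] (2 ^ e) = 2 ^ (e + k) := by
  obtain ⟨j, rfl⟩ := Nat.exists_eq_add_of_le (show k ≤ ℓ by omega)
  simpa [pow_add] using shift2_iterate_mul_add (k := k) (j := j) (q := 0) (r := 2 ^ e)
    (by positivity) (Nat.pow_lt_pow_right one_lt_two (by omega))

lemma shift2_iterate_two_pow_wrap {s t j : ℕ} (hs : 1 ≤ s) (hj : j ≤ t) :
    (shift2 (s + t))^[s + j] (2 ^ t) = 2 ^ j := by
  obtain ⟨i, rfl⟩ := Nat.exists_eq_add_of_le hj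
  simpa [pow_add, add_assoc] using
    shift2_iterate_mul_add (k := s + j) (j := i) (q := 2 ^ j) (r := 0)
    (Nat.pow_lt_pow_right one_lt_two (by omega)) (by positivity)

end Shift

section BinaryWeight

lemma s2_zero : s2 0 = 0 := by simp [s2]

lemma s2_two_mul_add {b : ℕ} (hb : b < 2) (u : ℕ) : s2 (2 * u + b) = s2 u + b := by
  rcases Nat.eq_zero_or_pos (2 * u + b) with h | h
  · obtain ⟨rfl, rfl⟩ : u = 0 ∧ b = 0 := by omega
    simp [s2]
  · rw [s2, Nat.digits_def' one_lt_two h, List.sum_cons, Nat.mul_add_mod, Nat.mod_eq_of_lt hb,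
      Nat.mul_add_div two_pos, Nat.div_eq_of_lt hb, add_zero, add_comm, s2]

lemma s2_two_mul (u : ℕ) : s2 (2 * u) = s2 u := s2_two_mul_add two_pos u

lemma s2_two_pow (e : ℕ) : s2 (2 ^ e) = 1 := by
  induction e with
  | zero => simp [s2]
  | succ e ih => rw [pow_succ', s2_two_mul, ih]

lemma exists_eq_add_two_pow {u : ℕ} (hu : u ≠ 0) : ∃ v e, u = v + 2 ^ e ∧ s2 u = s2 v + 1 := by
  induction u using Nat.strong_induction_on with
  | _ u ih =>
    obtain ⟨w, rfl | rfl⟩ := Nat.even_or_odd' u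
    · obtain ⟨v, e, rfl, hs⟩ := ih w (by omega) (by omega)
      exact ⟨2 * v, e + 1, by ring, by rw [s2_two_mul, s2_two_mul, hs]⟩
    · exact ⟨2 * w, 0, by simp, by rw [s2_two_mul_add one_lt_two, s2_two_mul]⟩

lemma two_pow_le_shift2_iterate_iff {ℓ u k : ℕ} (hu : u ≤ 2 ^ ℓ - 1) (hk : k < ℓ) :
    2 ^ (ℓ - 1) ≤ (shift2 ℓ)^[k] u ↔ u / 2 ^ (ℓ - 1 - k) % 2 = 1 := by
  obtain ⟨j, rfl⟩ := Nat.exists_eq_add_of_lt hk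
  obtain ⟨q, r, hr, rfl⟩ : ∃ q r, r < 2 ^ (j + 1) ∧ u = q * 2 ^ (j + 1) + r :=
    ⟨_, _, Nat.mod_lt _ (by positivity), (Nat.div_add_mod' u _).symm⟩
  have hq : q < 2 ^ k := by
    have hpos : 0 < 2 ^ (k + j + 1) := by positivity
    refine Nat.lt_of_mul_lt_mul_right (a := 2 ^ (j + 1)) ?_
    rw [← pow_add, ← add_assoc]
    omega
  have hdiv : (q * 2 ^ (j + 1) + r) / 2 ^ j = 2 * q + r / 2 ^ j := by
    rw [show q * 2 ^ (j + 1) + r = 2 ^ j * (2 * q) + r by ring, Nat.mul_add_div (by positivity)]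
  have hbit : r / 2 ^ j < 2 := Nat.div_lt_of_lt_mul (by rwa [← pow_succ])
  rw [add_assoc, shift2_iterate_mul_add hq hr, show k + (j + 1) - 1 = k + j by omega,
    Nat.add_sub_cancel_left, hdiv, pow_add]
  calc 2 ^ k * 2 ^ j ≤ r * 2 ^ k + q ↔ 2 ^ j ≤ r := by constructor <;> intro h <;> nlinarith
    _ ↔ 1 ≤ r / 2 ^ j := by rw [Nat.le_div_iff_mul_le (by positivity), one_mul]
    _ ↔ (2 * q + r / 2 ^ j) % 2 = 1 := by
      rw [Nat.mul_add_mod, Nat.mod_eq_of_lt hbit]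
      omega

lemma s2_eq_sum_div_two_pow_mod_two {ℓ u : ℕ} (hu : u < 2 ^ ℓ) :
    s2 u = ∑ i ∈ Finset.range ℓ, u / 2 ^ i % 2 := by
  induction ℓ generalizing u with
  | zero => simp_all [s2]
  | succ ℓ ih =>
    rw [Finset.sum_range_succ', pow_zero, Nat.div_one]
    conv_lhs => rw [← Nat.div_add_mod u 2]
    rw [s2_two_mul_add (Nat.mod_lt u two_pos), ih (by omega)]
    simp only [Nat.div_div_eq_div_mul, pow_succ']

lemma s2_eq_sum_two_pow_le_shift2_iterate {ℓ u : ℕ} (hu : u ≤ 2 ^ ℓ - 1) :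
    s2 u = ∑ k ∈ Finset.range ℓ, (if 2 ^ (ℓ - 1) ≤ (shift2 ℓ)^[k] u then 1 else 0) := by
  have hpos : 0 < 2 ^ ℓ := by positivity
  rw [s2_eq_sum_div_two_pow_mod_two (show u < 2 ^ ℓ by omega), ← Finset.sum_range_reflect]
  refine Finset.sum_congr rfl fun k hk => ?_
  simp only [two_pow_le_shift2_iterate_iff hu (Finset.mem_range.1 hk)]
  split_ifs <;> omega

lemma s2_shift2 {ℓ u : ℕ} (hu : u ≤ 2 ^ ℓ - 1) : s2 (shift2 ℓ u) = s2 u := by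
  rw [s2_eq_sum_two_pow_le_shift2_iterate hu, s2_eq_sum_two_pow_le_shift2_iterate (shift2_le hu)]
  simp only [← Function.iterate_succ_apply]
  set f : ℕ → ℕ := fun k => if 2 ^ (ℓ - 1) ≤ (shift2 ℓ)^[k] u then 1 else 0
  have hf : f ℓ = f 0 :=
    congrArg (fun v => if 2 ^ (ℓ - 1) ≤ v then 1 else 0) (shift2_iterate_self hu)
  have := (Finset.sum_range_succ f ℓ).symm.trans (Finset.sum_range_succ' f ℓ)
  change ∑ k ∈ Finset.range ℓ, f (k + 1) = ∑ k ∈ Finset.range ℓ, f k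
  omega

lemma s2_shift2_iterate {ℓ u : ℕ} (hu : u ≤ 2 ^ ℓ - 1) (k : ℕ) :
    s2 ((shift2 ℓ)^[k] u) = s2 u := by
  induction k with
  | zero => rfl
  | succ k ih => rw [Function.iterate_succ_apply', s2_shift2 (shift2_iterate_le hu k), ih]

end BinaryWeight
section Solutions

variable {D : Finset ℕ} {ℓ : ℕ} {U : ℕ → ℕ}

/-- The indices `d ∈ D` for which doubling `δ^k(u_d)` overflows modulo `2^ℓ - 1`, that is, those
for which the `k`-th binary digit of `u_d`, counted from the top, is `1`. -/
def carrySet (D : Finset ℕ) (ℓ : ℕ) (U : ℕ → ℕ) (k : ℕ) : Finset ℕ :=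
  D.filter fun d => 2 ^ (ℓ - 1) ≤ (shift2 ℓ)^[k] (U d)

lemma weight_eq_sum_card_carrySet (hU : ∀ d, U d ≤ 2 ^ ℓ - 1) :
    weight D U = ∑ k ∈ Finset.range ℓ, (carrySet D ℓ U k).card := by
  simp only [weight, carrySet, Finset.card_filter]
  rw [Finset.sum_comm]
  exact Finset.sum_congr rfl fun d _ => s2_eq_sum_two_pow_le_shift2_iterate (hU d)

lemma supportMap_periodic (D : Finset ℕ) (hU : ∀ d, U d ≤ 2 ^ ℓ - 1) :
    Function.Periodic (supportMap D ℓ U) ℓ := fun k => by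
  simp only [supportMap, Function.iterate_add_apply, shift2_iterate_self (hU _)]

lemma supportMap_comp_shift2_iterate (D : Finset ℕ) (ℓ : ℕ) (U : ℕ → ℕ) (j k : ℕ) :
    supportMap D ℓ (fun d => (shift2 ℓ)^[j] (U d)) k = supportMap D ℓ U (k + j) := by
  simp only [supportMap, Function.iterate_add_apply]

lemma weight_comp_shift2_iterate (D : Finset ℕ) (hU : ∀ d, U d ≤ 2 ^ ℓ - 1) (j : ℕ) :
    weight D (fun d => (shift2 ℓ)^[j] (U d)) = weight D U :=
  Finset.sum_congr rfl fun d _ => s2_shift2_iterate (hU d) j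

lemma IrreducibleSol.comp_shift2_iterate (h : IrreducibleSol D ℓ U)
    (hU : ∀ d, U d ≤ 2 ^ ℓ - 1) (j : ℕ) :
    IrreducibleSol D ℓ fun d => (shift2 ℓ)^[j] (U d) := by
  intro k hk k' hk' heq
  have hk := Finset.mem_range.1 hk
  have hk' := Finset.mem_range.1 hk'
  have hper := supportMap_periodic D hU
  have hmod (m : ℕ) : (m + j) % ℓ ∈ Finset.range ℓ :=
    Finset.mem_range.2 (Nat.mod_lt _ (by omega))
  rw [supportMap_comp_shift2_iterate, supportMap_comp_shift2_iterate, ← hper.map_mod_nat,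
    ← hper.map_mod_nat (k' + j)] at heq
  exact (Nat.ModEq.add_right_cancel' j (h (hmod k) (hmod k') heq)).eq_of_lt_of_lt hk hk'

lemma isShiftOf_comp_shift2_iterate (hU : ∀ d, U d ≤ 2 ^ ℓ - 1) {k : ℕ} (hk : k ≤ ℓ) :
    IsShiftOf ℓ U fun d => (shift2 ℓ)^[k] (U d) :=
  ⟨ℓ - k, fun d => by
    rw [← Function.iterate_add_apply, Nat.sub_add_cancel hk, shift2_iterate_self (hU d)]⟩

namespace IsSolution

lemma dvd_sum_shift2_iterate (h : IsSolution D ℓ U) (k : ℕ) :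
    2 ^ ℓ - 1 ∣ ∑ d ∈ D, d * (shift2 ℓ)^[k] (U d) := by
  have hmod : ∑ d ∈ D, d * (shift2 ℓ)^[k] (U d) ≡ 2 ^ k * ∑ d ∈ D, d * U d [MOD 2 ^ ℓ - 1] := by
    rw [Finset.mul_sum]
    refine Nat.ModEq.sum fun d _ => ?_
    rw [mul_left_comm]
    exact (shift2_iterate_modEq ℓ (U d) k).mul_left d
  exact (hmod.dvd_iff dvd_rfl).2 (h.dvd.mul_left _)

lemma mul_supportMap (h : IsSolution D ℓ U) (k : ℕ) :
    (2 ^ ℓ - 1) * supportMap D ℓ U k = ∑ d ∈ D, d * (shift2 ℓ)^[k] (U d) :=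
  Nat.mul_div_cancel' (h.dvd_sum_shift2_iterate k)

lemma supportMap_pos (h : IsSolution D ℓ U) (k : ℕ) : 0 < supportMap D ℓ U k := by
  obtain ⟨d, hd, hpos⟩ := Finset.exists_lt_of_sum_lt
    (f := fun _ => 0) (g := fun d => d * U d) (s := D) (by simpa using h.pos)
  have hsum : 0 < ∑ d ∈ D, d * (shift2 ℓ)^[k] (U d) := by
    refine Finset.sum_pos' (fun _ _ => Nat.zero_le _) ⟨d, hd, Nat.pos_of_ne_zero fun h0 => ?_⟩
    rw [mul_eq_zero, shift2_iterate_eq_zero_iff (h.bounded d), ← mul_eq_zero] at h0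
    exact hpos.ne' h0
  rw [← h.mul_supportMap] at hsum
  exact Nat.pos_of_mul_pos_left hsum

lemma supportMap_succ_add_sum_carrySet (h : IsSolution D ℓ U) (k : ℕ) :
    supportMap D ℓ U (k + 1) + ∑ d ∈ carrySet D ℓ U k, d = 2 * supportMap D ℓ U k := by
  have hpos : 0 < 2 ^ ℓ - 1 := mersenne_pos.2 h.len_pos
  refine Nat.eq_of_mul_eq_mul_left hpos ?_
  rw [mul_add, mul_left_comm, h.mul_supportMap, h.mul_supportMap, carrySet, Finset.sum_filter,
    Finset.mul_sum, Finset.mul_sum, ← Finset.sum_add_distrib]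
  refine Finset.sum_congr rfl fun d _ => ?_
  have := shift2_add_ite h.len_pos (shift2_iterate_le (h.bounded d) k)
  rw [mul_left_comm, ← this, Function.iterate_succ_apply', mul_add]
  split_ifs <;> ring

lemma comp_shift2_iterate (h : IsSolution D ℓ U) (k : ℕ) :
    IsSolution D ℓ fun d => (shift2 ℓ)^[k] (U d) where
  len_pos := h.len_pos
  bounded d := shift2_iterate_le (h.bounded d) k
  supp_sub d hd := by rw [h.supp_sub d hd, shift2_iterate_zero]
  dvd := h.dvd_sum_shift2_iterate k
  pos := by
    rw [← h.mul_supportMap]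
    exact Nat.mul_pos (mersenne_pos.2 h.len_pos) (h.supportMap_pos k)

end IsSolution

end Solutions

section Potential

variable {n x : ℕ}

/-- The loss incurred by `potential` when the value `x` is doubled. For odd `x` it is the least `p`
with `4 < 2 ^ p * x`. -/
def penalty (x : ℕ) : ℕ := if x = 1 then 3 else if x = 3 then 1 else 0

/-- A potential on the values of a support map: it increases by `1` when `x` is doubled, except for
the losses at `x = 1` and `x = 3`, and by at most `n - 2` when an odd number less than `2 ^ (n + 1)`
is added to `x`. It takes values in `ℤ` so that no subtraction is truncated. -/
def potential (n x : ℕ) : ℤ :=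
  max ((x.factorization 2 : ℤ) + n - 2) (Nat.log 2 x) - (penalty (ordCompl[2] x) - penalty x)

lemma five_le_two_pow_penalty_mul {o : ℕ} (ho : Odd o) : 5 ≤ 2 ^ penalty o * o := by
  obtain ⟨m, rfl⟩ := ho
  unfold penalty
  split_ifs <;> omega

lemma penalty_of_even (hx : Even x) : penalty x = 0 := by
  obtain ⟨m, rfl⟩ := hx
  unfold penalty
  split_ifs <;> omega

lemma potential_two_mul (hx : 0 < x) : potential n (2 * x) = potential n x + 1 - penalty x := by
  have hfac : (2 * x).factorization 2 = x.factorization 2 + 1 := by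
    rw [Nat.factorization_mul two_ne_zero hx.ne', Finsupp.add_apply,
      Nat.prime_two.factorization_self, add_comm]
  have hcompl : ordCompl[2] (2 * x) = ordCompl[2] x := by
    rw [hfac, pow_succ', Nat.mul_div_mul_left _ _ two_pos]
  have hlog : Nat.log 2 (2 * x) = Nat.log 2 x + 1 := by
    rw [mul_comm, Nat.log_mul_base one_lt_two hx.ne']
  simp only [potential, hcompl]
  rw [hlog, hfac, penalty_of_even (even_two_mul x)]
  push_cast
  omega

lemma potential_of_odd (hx : Odd x) : potential n x = max ((n : ℤ) - 2) (Nat.log 2 x) := by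
  have hfac : x.factorization 2 = 0 :=
    Nat.factorization_eq_zero_of_not_dvd hx.not_two_dvd_nat
  simp [potential, hfac]

lemma le_potential_of_even (hx : Even x) (hx0 : x ≠ 0) :
    max ((n : ℤ) - 1) (Nat.log 2 x) - 3 ≤ potential n x := by
  have hfac : 1 ≤ x.factorization 2 :=
    (Nat.prime_two.dvd_iff_one_le_factorization hx0).1 hx.two_dvd
  have hpen : penalty (ordCompl[2] x) ≤ 3 := by
    unfold penalty
    split_ifs <;> omega
  simp only [potential]
  omega

lemma log_two_add_le {d : ℕ} (hd : d < 2 ^ (n + 1)) :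
    Nat.log 2 (x + d) ≤ max (n + 1) (Nat.log 2 x + 1) := by
  have hlog : x < 2 ^ (Nat.log 2 x + 1) := Nat.lt_pow_succ_log_self one_lt_two x
  have hx' := hlog.trans_le (Nat.pow_le_pow_right two_pos (le_max_right (n + 1) _))
  have hd' := hd.trans_le (Nat.pow_le_pow_right two_pos (le_max_left _ (Nat.log 2 x + 1)))
  exact Nat.lt_succ_iff.1 (Nat.log_lt_of_lt_pow' (by omega) (by rw [pow_succ]; omega))

-- If the left-hand side is `b ≥ n - 1`, then `5 * 2 ^ b ≤ x + d` while `d < 4 * 2 ^ b`, so that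
-- `2 ^ b < x`.
lemma factorization_two_sub_penalty_le {d : ℕ} (hx : 0 < x) (hd : d < 2 ^ (n + 1)) :
    ((x + d).factorization 2 : ℤ) - penalty (ordCompl[2] (x + d)) ≤
      max ((n : ℤ) - 2) (Nat.log 2 x) := by
  set a := (x + d).factorization 2
  set o := ordCompl[2] (x + d)
  by_contra! hlt
  obtain ⟨b, hb⟩ : ∃ b, a = b + penalty o := ⟨a - penalty o, by omega⟩
  have ho : Odd o := Nat.coprime_two_left.1 (Nat.coprime_ordCompl Nat.prime_two (by omega))
  have hsum : 2 ^ b * 5 ≤ x + d :=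
    calc 2 ^ b * 5 ≤ 2 ^ b * (2 ^ penalty o * o) :=
          Nat.mul_le_mul_left _ (five_le_two_pow_penalty_mul ho)
      _ = 2 ^ a * o := by rw [hb, pow_add, mul_assoc]
      _ = x + d := Nat.ordProj_mul_ordCompl_eq_self (x + d) 2
  have hdb : d < 2 ^ b * 4 :=
    hd.trans_le ((Nat.pow_le_pow_right two_pos (by omega)).trans_eq (pow_add 2 b 2))
  have hlog : b ≤ Nat.log 2 x := Nat.le_log_of_pow_le one_lt_two (by omega)
  omega

lemma potential_add_odd_le {d : ℕ} (hn : 7 ≤ n) (hx : 0 < x) (hd : Odd d) (hdn : d < 2 ^ (n + 1)) :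
    potential n (x + d) ≤ potential n x + (n - 2) := by
  have hlog := log_two_add_le (x := x) hdn
  rcases Nat.even_or_odd x with hxe | hxo
  · have := le_potential_of_even (n := n) hxe hx.ne'
    rw [potential_of_odd (hxe.add_odd hd)]
    omega
  · have := factorization_two_sub_penalty_le hx hdn
    rw [potential_of_odd hxo, potential, penalty_of_even (hxo.add_odd hd)]
    omega

lemma potential_add_sum_le {A : Finset ℕ} (hn : 7 ≤ n) (hx : 0 < x)
    (hA : ∀ d ∈ A, Odd d ∧ d < 2 ^ (n + 1)) :
    potential n (x + ∑ d ∈ A, d) ≤ potential n x + (n - 2) * A.card := by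
  induction A using Finset.induction_on with
  | empty => simp
  | insert d A hdA ih =>
    obtain ⟨⟨hd, hdn⟩, hA⟩ := Finset.forall_mem_insert .. |>.1 hA
    have hstep := potential_add_odd_le hn (x := x + ∑ d ∈ A, d) (by omega) hd hdn
    rw [Finset.sum_insert hdA, Finset.card_insert_of_notMem hdA, add_comm d, ← add_assoc]
    push_cast
    linarith [ih hA]

end Potential

section LengthBound

variable {D : Finset ℕ} {n ℓ : ℕ} {U : ℕ → ℕ}

lemma IsSolution.length_le (hn : 7 ≤ n) (hD : ∀ d ∈ D, Odd d ∧ d < 2 ^ (n + 1))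
    (h : IsSolution D ℓ U) :
    ℓ ≤ (n - 2) * weight D U + ∑ k ∈ Finset.range ℓ, penalty (supportMap D ℓ U k) := by
  set x := supportMap D ℓ U
  have hstep (k : ℕ) : potential n (x k) - potential n (x (k + 1)) ≤
      (n - 2) * (carrySet D ℓ U k).card + penalty (x k) - 1 := by
    have hadd := potential_add_sum_le hn (h.supportMap_pos (k + 1)) (A := carrySet D ℓ U k)
      fun d hd => hD d (Finset.mem_filter.1 hd).1
    rw [h.supportMap_succ_add_sum_carrySet, potential_two_mul (h.supportMap_pos k)] at hadd
    linarith
  have htel : ∑ k ∈ Finset.range ℓ, (potential n (x k) - potential n (x (k + 1))) = 0 := by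
    rw [Finset.sum_range_sub', sub_eq_zero]
    exact congrArg _ (supportMap_periodic D h.bounded).eq.symm
  have hsum := htel.symm.trans_le (Finset.sum_le_sum fun k _ => hstep k)
  simp only [Finset.sum_sub_distrib, Finset.sum_add_distrib, ← Finset.mul_sum,
    ← Nat.cast_sum, ← weight_eq_sum_card_carrySet h.bounded, Finset.sum_const,
    Finset.card_range, nsmul_one] at hsum
  zify [show 2 ≤ n by omega]
  push_cast at hsum
  linarith

lemma IrreducibleSol.sum_penalty_le (h : IrreducibleSol D ℓ U) {S : Finset ℕ}
    (hS : ∀ k < ℓ, penalty (supportMap D ℓ U k) ≠ 0 → supportMap D ℓ U k ∈ S) :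
    ∑ k ∈ Finset.range ℓ, penalty (supportMap D ℓ U k) ≤ ∑ x ∈ S, penalty x := by
  rw [← Finset.sum_image (f := penalty) h]
  refine Finset.sum_le_sum_of_ne_zero ?_
  simpa [Finset.forall_mem_image] using hS

lemma IsSolution.weight_eq_two_and_length_eq (hn : 7 ≤ n) (hD : ∀ d ∈ D, Odd d ∧ d < 2 ^ (n + 1))
    (h : IsSolution D ℓ U) (hirr : IrreducibleSol D ℓ U) (hlt : ℓ < n * weight D U)
    (hle : (2 * n - 1) * weight D U ≤ 2 * ℓ) :
    weight D U = 2 ∧ ℓ = 2 * n - 1 ∧ ∃ k < ℓ, supportMap D ℓ U k = 1 := by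
  have hlen := h.length_le hn hD
  have hpen : ∑ k ∈ Finset.range ℓ, penalty (supportMap D ℓ U k) ≤ 4 :=
    hirr.sum_penalty_le (S := {1, 3}) fun k _ hk => by
      unfold penalty at hk
      split_ifs at hk <;> simp_all
  have hthree : 3 * weight D U ≤ 8 := by
    zify [show 2 ≤ n by omega, show 1 ≤ 2 * n by omega] at hlen hle hpen ⊢
    linarith
  have hle_two : weight D U ≤ 2 := by omega
  have hweight : weight D U = 2 := by interval_cases weight D U <;> omega
  rw [hweight] at hlt hle hlen
  refine ⟨hweight, by omega, ?_⟩
  by_contra! hne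
  have : ∑ k ∈ Finset.range ℓ, penalty (supportMap D ℓ U k) ≤ 1 :=
    hirr.sum_penalty_le (S := {3}) fun k hk hpos => by
      unfold penalty at hpos
      split_ifs at hpos <;> simp_all
  omega

end LengthBound

section TwoTerm

/-- The two-digit family `2 ^ t * (2 ^ s - i) + 1 * (i * 2 ^ t - 1) = 2 ^ (s + t) - 1`. -/
def twoTerm (s t i : ℕ) : ℕ → ℕ := sol2 (2 ^ s - i) (2 ^ t) (i * 2 ^ t - 1) 1

/-- The conditions on the parameters under which `twoTerm s t i` is a solution of length `s + t`
for `D` with two nonzero coordinates. -/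
structure TwoTermAdmissible (D : Finset ℕ) (s t i : ℕ) : Prop where
  s_pos : 0 < s
  i_pos : 0 < i
  i_le : i ≤ 2 ^ s
  left_mem : 2 ^ s - i ∈ D
  right_mem : i * 2 ^ t - 1 ∈ D
  ne : 2 ^ s - i ≠ i * 2 ^ t - 1

lemma sum_sol2 {D : Finset ℕ} {a b : ℕ} (x y : ℕ) (ha : a ∈ D) (hb : b ∈ D) (hab : a ≠ b)
    {F : ℕ → ℕ → ℕ} (hF : ∀ d, F d 0 = 0) :
    ∑ d ∈ D, F d (sol2 a x b y d) = F a x + F b y := by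
  rw [Finset.sum_eq_add_of_mem a b ha hb hab]
  · simp [sol2, hab.symm]
  · intro d _ hd
    simp [sol2, hd.1, hd.2, hF]

namespace TwoTermAdmissible

variable {D : Finset ℕ} {s t i : ℕ}

lemma sum_twoTerm (h : TwoTermAdmissible D s t i) {F : ℕ → ℕ → ℕ} (hF : ∀ d, F d 0 = 0) :
    ∑ d ∈ D, F d (twoTerm s t i d) = F (2 ^ s - i) (2 ^ t) + F (i * 2 ^ t - 1) 1 :=
  sum_sol2 _ _ h.left_mem h.right_mem h.ne hF

lemma weight_twoTerm (h : TwoTermAdmissible D s t i) : weight D (twoTerm s t i) = 2 := by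
  have hone : s2 1 = 1 := s2_two_pow 0
  rw [weight, h.sum_twoTerm (F := fun _ => s2) fun _ => s2_zero, s2_two_pow, hone]

lemma sum_shift2_iterate_twoTerm (h : TwoTermAdmissible D s t i) (k : ℕ) :
    ∑ d ∈ D, d * (shift2 (s + t))^[k] (twoTerm s t i d) =
      (2 ^ s - i) * (shift2 (s + t))^[k] (2 ^ t) +
        (i * 2 ^ t - 1) * (shift2 (s + t))^[k] (2 ^ 0) :=
  h.sum_twoTerm (F := fun d u => d * (shift2 (s + t))^[k] u) fun d => by
    rw [shift2_iterate_zero, mul_zero]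

lemma sum_shift2_iterate_twoTerm_of_lt (h : TwoTermAdmissible D s t i) {k : ℕ} (hk : k < s) :
    ∑ d ∈ D, d * (shift2 (s + t))^[k] (twoTerm s t i d) = (2 ^ (s + t) - 1) * 2 ^ k := by
  have hpos : 0 < i * 2 ^ t := Nat.mul_pos h.i_pos (by positivity)
  rw [h.sum_shift2_iterate_twoTerm, shift2_iterate_two_pow (by omega),
    shift2_iterate_two_pow (by omega)]
  zify [h.i_le, hpos, Nat.one_le_two_pow (n := s + t)]
  ring

lemma sum_shift2_iterate_twoTerm_add (h : TwoTermAdmissible D s t i) {j : ℕ} (hj : j < t) :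
    ∑ d ∈ D, d * (shift2 (s + t))^[s + j] (twoTerm s t i d) =
      (2 ^ (s + t) - 1) * (i * 2 ^ j) := by
  have hpos : 0 < i * 2 ^ t := Nat.mul_pos h.i_pos (by positivity)
  rw [h.sum_shift2_iterate_twoTerm, shift2_iterate_two_pow_wrap h.s_pos hj.le,
    shift2_iterate_two_pow (by omega)]
  zify [h.i_le, hpos, Nat.one_le_two_pow (n := s + t)]
  ring

lemma two_pow_sub_one_pos (h : TwoTermAdmissible D s t i) : 0 < 2 ^ (s + t) - 1 :=
  mersenne_pos.2 (Nat.add_pos_left h.s_pos t)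

lemma supportMap_of_lt (h : TwoTermAdmissible D s t i) {k : ℕ} (hk : k < s) :
    supportMap D (s + t) (twoTerm s t i) k = 2 ^ k := by
  rw [supportMap, h.sum_shift2_iterate_twoTerm_of_lt hk,
    Nat.mul_div_cancel_left _ h.two_pow_sub_one_pos]

lemma supportMap_add (h : TwoTermAdmissible D s t i) {j : ℕ} (hj : j < t) :
    supportMap D (s + t) (twoTerm s t i) (s + j) = i * 2 ^ j := by
  rw [supportMap, h.sum_shift2_iterate_twoTerm_add hj,
    Nat.mul_div_cancel_left _ h.two_pow_sub_one_pos]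

lemma isSolution (h : TwoTermAdmissible D s t i) : IsSolution D (s + t) (twoTerm s t i) := by
  have hsum : ∑ d ∈ D, d * twoTerm s t i d = 2 ^ (s + t) - 1 := by
    simpa using h.sum_shift2_iterate_twoTerm_of_lt h.s_pos
  refine ⟨by have := h.s_pos; omega, fun d => ?_, fun d hd => ?_, hsum ▸ dvd_rfl,
    hsum ▸ h.two_pow_sub_one_pos⟩
  · have hlt : 2 ^ t < 2 ^ (s + t) :=
      Nat.pow_lt_pow_right one_lt_two (by have := h.s_pos; omega)
    have hpos : 0 < 2 ^ t := by positivity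
    unfold twoTerm sol2
    split_ifs <;> omega
  · have hleft : d ≠ 2 ^ s - i := fun hd' => hd (hd' ▸ h.left_mem)
    have hright : d ≠ i * 2 ^ t - 1 := fun hd' => hd (hd' ▸ h.right_mem)
    simp [twoTerm, sol2, hleft, hright]

lemma irreducibleSol (h : TwoTermAdmissible D s t i) (hodd : Odd i) (hi : i ≠ 1) :
    IrreducibleSol D (s + t) (twoTerm s t i) := by
  have hne (k j : ℕ) : i * 2 ^ j ≠ 2 ^ k := fun heq =>
    hi ((hodd.coprime_two_right.pow_right k).eq_one_of_dvd (Dvd.intro _ heq))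
  have hcases : ∀ k < s + t, k < s ∨ ∃ j < t, k = s + j := fun k hk =>
    (lt_or_ge k s).imp_right fun hsk => ⟨k - s, by omega, by omega⟩
  intro k hk k' hk' heq
  rcases hcases k (Finset.mem_range.1 hk) with hks | ⟨j, hj, rfl⟩ <;>
    rcases hcases k' (Finset.mem_range.1 hk') with hks' | ⟨j', hj', rfl⟩
  · rw [h.supportMap_of_lt hks, h.supportMap_of_lt hks'] at heq
    exact Nat.pow_right_injective le_rfl heq
  · rw [h.supportMap_of_lt hks, h.supportMap_add hj'] at heq
    exact absurd heq.symm (hne _ _)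
  · rw [h.supportMap_add hj, h.supportMap_of_lt hks'] at heq
    exact absurd heq (hne _ _)
  · rw [h.supportMap_add hj, h.supportMap_add hj'] at heq
    rw [Nat.pow_right_injective le_rfl (Nat.eq_of_mul_eq_mul_left h.i_pos heq)]

lemma ne_one_of_irreducibleSol (h : TwoTermAdmissible D s t i) (ht : 0 < t)
    (hirr : IrreducibleSol D (s + t) (twoTerm s t i)) : i ≠ 1 := by
  rintro rfl
  have heq : supportMap D (s + t) (twoTerm s t 1) (s + 0) =
      supportMap D (s + t) (twoTerm s t 1) 0 := by
    rw [h.supportMap_add ht, h.supportMap_of_lt h.s_pos, one_mul]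
  have hs := h.s_pos
  have := hirr (Finset.mem_range.2 (by omega)) (Finset.mem_range.2 (by omega)) heq
  omega

end TwoTermAdmissible

end TwoTerm

section ExtremalParams

variable {n s t i : ℕ}

/-- The parameters of the four solutions `twoTerm s t i` of length `2 * n - 1` and weight `2`. -/
def ExtremalParams (n s t i : ℕ) : Prop :=
  (s = n ∧ t + 1 = n ∧ i = 3) ∨ (s = n + 1 ∧ t + 2 = n ∧ i ∈ ({3, 5, 7} : Finset ℕ))

lemma mem_oddD {d : ℕ} : d ∈ oddD n ↔ Odd d ∧ d ≤ 2 ^ (n + 1) - 3 := by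
  simp only [oddD, oddUpTo, Finset.mem_filter, Finset.mem_range, Nat.odd_iff, Nat.lt_succ_iff,
    and_comm]

lemma odd_and_lt_of_mem_oddD {d : ℕ} (hd : d ∈ oddD n) : Odd d ∧ d < 2 ^ (n + 1) := by
  have hpos : 0 < 2 ^ (n + 1) := by positivity
  have := mem_oddD.1 hd
  exact ⟨this.1, by omega⟩

lemma ExtremalParams.add_eq (h : ExtremalParams n s t i) : s + t = 2 * n - 1 := by
  rcases h with h | h <;> omega

lemma ExtremalParams.odd_and_ne_one (h : ExtremalParams n s t i) : Odd i ∧ i ≠ 1 := by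
  simp only [ExtremalParams, Finset.mem_insert, Finset.mem_singleton] at h
  rw [Nat.odd_iff]
  omega

lemma ExtremalParams.admissible (hn : 4 ≤ n) (h : ExtremalParams n s t i) :
    TwoTermAdmissible (oddD n) s t i := by
  obtain ⟨m, rfl⟩ := Nat.exists_eq_add_of_le' hn
  have hpos : 0 < 2 ^ m := by positivity
  simp only [ExtremalParams, Finset.mem_insert, Finset.mem_singleton] at h
  obtain ⟨rfl, ht, rfl⟩ | ⟨rfl, ht, hi⟩ := h
  · obtain rfl : t = m + 3 := by omega
    refine ⟨by omega, by omega, ?_, mem_oddD.2 ?_, mem_oddD.2 ?_, ?_⟩ <;>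
      simp only [Nat.odd_iff, pow_succ] <;> omega
  · obtain rfl : t = m + 2 := by omega
    rcases hi with rfl | rfl | rfl <;>
      refine ⟨by omega, by omega, ?_, mem_oddD.2 ?_, mem_oddD.2 ?_, ?_⟩ <;>
      simp only [Nat.odd_iff, pow_succ] <;> omega

lemma extremalParams_of_lt (hn : 3 ≤ n) (hst : s + t = 2 * n - 1) (hodd : Odd i) (hi : i ≠ 1)
    (ha : 2 ^ s - i < 2 ^ (n + 1)) (hb : i * 2 ^ t - 1 < 2 ^ (n + 1)) :
    ExtremalParams n s t i := by
  have hi3 : 3 ≤ i := by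
    obtain ⟨m, rfl⟩ := hodd
    omega
  have htn : t < n := by
    by_contra! hnt
    have := Nat.mul_le_mul hi3 (Nat.pow_le_pow_right two_pos hnt)
    omega
  obtain ⟨c, rfl⟩ : ∃ c, n = t + c + 1 := ⟨n - 1 - t, by omega⟩
  obtain rfl : s = t + 2 * c + 1 := by omega
  have hic : i ≤ 2 ^ (c + 2) := by
    refine Nat.le_of_mul_le_mul_right (c := 2 ^ t) ?_ (by positivity)
    rw [← pow_add, show c + 2 + t = t + c + 1 + 1 by ring]
    omega
  have hc : c < 2 := by
    by_contra! hc
    have hn8 := Nat.pow_le_pow_right two_pos hn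
    have hc4 := Nat.pow_le_pow_right two_pos hc
    have hs : 2 ^ (t + 2 * c + 1) = 2 ^ (t + c + 1) * 2 ^ c := by rw [← pow_add]; ring_nf
    rw [hs, pow_succ _ (t + c + 1)] at ha
    rw [pow_add 2 c 2] at hic
    have : 2 ^ (t + c + 1) * 2 ^ c < 2 ^ (t + c + 1) * 2 + 2 ^ c * 4 := by omega
    nlinarith
  obtain ⟨m, rfl⟩ := hodd
  simp only [ExtremalParams, Finset.mem_insert, Finset.mem_singleton]
  interval_cases c <;> omega

end ExtremalParams

section Classification

variable {D : Finset ℕ} {n ℓ : ℕ} {U V : ℕ → ℕ}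

lemma exists_eq_add_single (hsupp : ∀ d ∉ D, V d = 0) {w : ℕ} (hw : weight D V = w + 1) :
    ∃ a ∈ D, ∃ (e : ℕ) (W : ℕ → ℕ), V = W + Pi.single a (2 ^ e) ∧ weight D W = w ∧
      ∀ d ∉ D, W d = 0 := by
  obtain ⟨a, ha, hVa⟩ : ∃ a ∈ D, s2 (V a) ≠ 0 :=
    Finset.exists_ne_zero_of_sum_ne_zero (by rw [← weight, hw]; omega)
  obtain ⟨v, e, hv, hs⟩ := exists_eq_add_two_pow fun h0 => hVa (h0 ▸ s2_zero)
  refine ⟨a, ha, e, Function.update V a v, ?_, ?_, fun d hd => ?_⟩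
  · ext d
    rcases eq_or_ne d a with rfl | hd <;> simp [*]
  · have hsum (W : ℕ → ℕ) : weight D W = ∑ d ∈ D.erase a, s2 (W d) + s2 (W a) :=
      (Finset.sum_erase_add D _ ha).symm
    have hrest : ∑ d ∈ D.erase a, s2 (Function.update V a v d) = ∑ d ∈ D.erase a, s2 (V d) :=
      Finset.sum_congr rfl fun d hd => by rw [Function.update_of_ne (Finset.ne_of_mem_erase hd)]
    rw [hsum, hrest, Function.update_self]
    rw [hsum] at hw
    omega
  · rw [Function.update_of_ne (ne_of_mem_of_not_mem ha hd).symm, hsupp d hd]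

lemma eq_zero_of_weight_eq_zero (hsupp : ∀ d ∉ D, V d = 0) (hw : weight D V = 0) : V = 0 := by
  ext d
  by_cases hd : d ∈ D
  · by_contra hne
    obtain ⟨v, e, -, hs⟩ := exists_eq_add_two_pow hne
    have := Finset.sum_eq_zero_iff.1 hw d hd
    omega
  · exact hsupp d hd

lemma exists_eq_single_add_single (hsupp : ∀ d ∉ D, V d = 0) (hw : weight D V = 2) :
    ∃ a ∈ D, ∃ b ∈ D, ∃ e f, V = Pi.single a (2 ^ e) + Pi.single b (2 ^ f) := by
  obtain ⟨b, hb, f, W, rfl, hW, hWsupp⟩ := exists_eq_add_single hsupp hw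
  obtain ⟨a, ha, e, Z, rfl, hZ, hZsupp⟩ := exists_eq_add_single hWsupp hW
  rw [eq_zero_of_weight_eq_zero hZsupp hZ, zero_add]
  exact ⟨a, ha, b, hb, e, f, rfl⟩

lemma exists_params_of_odd_mul_two_pow_add {a b t : ℕ} (ha : Odd a)
    (h : a * 2 ^ t + b + 1 = 2 ^ ℓ) :
    ∃ s i, 0 < s ∧ s + t = ℓ ∧ Odd i ∧ i ≤ 2 ^ s ∧ a = 2 ^ s - i ∧ b = i * 2 ^ t - 1 := by
  have hlt : a * 2 ^ t < 2 ^ ℓ := by omega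
  have htℓ : t < ℓ := by
    refine (Nat.pow_lt_pow_iff_right one_lt_two).1 (lt_of_le_of_lt ?_ hlt)
    exact Nat.le_mul_of_pos_left _ ha.pos
  obtain ⟨s, rfl⟩ := Nat.exists_eq_add_of_le' htℓ.le
  rw [pow_add] at h hlt
  have has : a < 2 ^ s := Nat.lt_of_mul_lt_mul_right hlt
  have heven : Even (2 ^ s) := (Nat.even_pow' (by omega)).2 even_two
  refine ⟨s, 2 ^ s - a, by omega, rfl, Nat.Even.sub_odd has.le heven ha, by omega, by omega, ?_⟩
  rw [Nat.sub_mul]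
  omega

lemma exists_eq_single_two_pow_add_single (hD : ∀ d ∈ D, Odd d)
    (h : IsSolution D ℓ V) (hw : weight D V = 2) (h0 : supportMap D ℓ V 0 = 1) :
    ∃ s t i, 0 < s ∧ 0 < t ∧ s + t = ℓ ∧ Odd i ∧ i ≤ 2 ^ s ∧ 2 ^ s - i ∈ D ∧
      i * 2 ^ t - 1 ∈ D ∧ V = Pi.single (2 ^ s - i) (2 ^ t) + Pi.single (i * 2 ^ t - 1) 1 := by
  obtain ⟨a, ha, b, hb, e, f, rfl⟩ := exists_eq_single_add_single h.supp_sub hw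
  have hsum : a * 2 ^ e + b * 2 ^ f + 1 = 2 ^ ℓ := by
    have := h.mul_supportMap 0
    simp only [h0, mul_one, Pi.add_apply, Pi.single_apply, Function.iterate_zero, id_eq, mul_add,
      mul_ite, mul_zero, Finset.sum_add_distrib, Finset.sum_ite_eq', ha, hb, if_true] at this
    have hpos : 0 < 2 ^ ℓ := by positivity
    omega
  have heven : Even (2 ^ ℓ) := (Nat.even_pow' (by have := h.len_pos; omega)).2 even_two
  have hpar : e = 0 ↔ f ≠ 0 := by
    have ha' := Nat.not_even_iff_odd.2 (hD a ha)
    have hb' := Nat.not_even_iff_odd.2 (hD b hb)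
    simp only [← hsum, Nat.even_add, Nat.even_mul, ha', Nat.even_pow, even_two, ne_eq, true_and,
      false_or, hb', Nat.not_even_one, iff_false] at heven
    tauto
  rcases eq_or_ne e 0 with rfl | he
  · have hsum' : b * 2 ^ f + a + 1 = 2 ^ ℓ := by omega
    obtain ⟨s, i, hs, hst, hi, his, rfl, rfl⟩ :=
      exists_params_of_odd_mul_two_pow_add (hD b hb) hsum'
    exact ⟨s, f, i, hs, by omega, hst, hi, his, hb, ha, add_comm _ _⟩
  · obtain rfl : f = 0 := by tauto
    have hsum' : a * 2 ^ e + b + 1 = 2 ^ ℓ := by omega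
    obtain ⟨s, i, hs, hst, hi, his, rfl, rfl⟩ :=
      exists_params_of_odd_mul_two_pow_add (hD a ha) hsum'
    exact ⟨s, e, i, hs, by omega, hst, hi, his, ha, hb, rfl⟩

lemma single_add_single_eq_sol2 {a b : ℕ} (hab : a ≠ b) (x y : ℕ) :
    Pi.single a x + Pi.single b y = sol2 a x b y := by
  ext d
  simp only [Pi.add_apply, Pi.single_apply, sol2]
  split_ifs <;> omega

lemma IsSolution.exists_extremalParams (hn : 4 ≤ n) (h : IsSolution (oddD n) (2 * n - 1) V)
    (hirr : IrreducibleSol (oddD n) (2 * n - 1) V) (hw : weight (oddD n) V = 2)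
    (h0 : supportMap (oddD n) (2 * n - 1) V 0 = 1) :
    ∃ s t i, ExtremalParams n s t i ∧ V = twoTerm s t i := by
  obtain ⟨s, t, i, hs, ht, hst, hodd, his, ha, hb, rfl⟩ :=
    exists_eq_single_two_pow_add_single (fun d hd => (mem_oddD.1 hd).1) h hw h0
  have hparams (hi : i ≠ 1) : ExtremalParams n s t i :=
    extremalParams_of_lt (by omega) hst hodd hi (odd_and_lt_of_mem_oddD ha).2
      (odd_and_lt_of_mem_oddD hb).2
  have hne : 2 ^ s - i ≠ i * 2 ^ t - 1 := by
    rcases eq_or_ne i 1 with rfl | hi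
    · intro heq
      have : s = t := Nat.pow_right_injective le_rfl (by
        dsimp only
        have := Nat.one_le_two_pow (n := s)
        have := Nat.one_le_two_pow (n := t)
        omega)
      omega
    · exact ((hparams hi).admissible hn).ne
  rw [single_add_single_eq_sol2 hne] at hirr ⊢
  have hadm : TwoTermAdmissible (oddD n) s t i := ⟨hs, hodd.pos, his, ha, hb, hne⟩
  rw [← hst] at hirr
  exact ⟨s, t, i, hparams (hadm.ne_one_of_irreducibleSol ht hirr), rfl⟩

lemma IsSolution.exists_extremalParams_isShiftOf (hn : 4 ≤ n)
    (h : IsSolution (oddD n) (2 * n - 1) U) (hirr : IrreducibleSol (oddD n) (2 * n - 1) U)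
    (hw : weight (oddD n) U = 2) {k : ℕ} (hk : k < 2 * n - 1)
    (hone : supportMap (oddD n) (2 * n - 1) U k = 1) :
    ∃ s t i, ExtremalParams n s t i ∧ IsShiftOf (2 * n - 1) U (twoTerm s t i) := by
  obtain ⟨s, t, i, hparams, hV⟩ := (h.comp_shift2_iterate k).exists_extremalParams hn
    (hirr.comp_shift2_iterate h.bounded k) (by rw [weight_comp_shift2_iterate _ h.bounded, hw])
    (by rw [supportMap_comp_shift2_iterate, zero_add, hone])
  exact ⟨s, t, i, hparams, hV ▸ isShiftOf_comp_shift2_iterate h.bounded hk.le⟩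

lemma ExtremalParams.isSolution_and_irreducibleSol_and_weight_eq_two {s t i : ℕ} (hn : 4 ≤ n)
    (h : ExtremalParams n s t i) :
    IsSolution (oddD n) (2 * n - 1) (twoTerm s t i) ∧
      IrreducibleSol (oddD n) (2 * n - 1) (twoTerm s t i) ∧
      weight (oddD n) (twoTerm s t i) = 2 := by
  have hadm := h.admissible hn
  rw [← h.add_eq]
  exact ⟨hadm.isSolution, hadm.irreducibleSol h.odd_and_ne_one.1 h.odd_and_ne_one.2,
    hadm.weight_twoTerm⟩

lemma lt_mul_of_two_mul_sub_one_mul_eq {w : ℕ} (hℓ : 0 < ℓ) (h : (2 * n - 1) * w = 2 * ℓ) :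
    ℓ < n * w := by
  have hw : 0 < w := Nat.pos_of_ne_zero (by rintro rfl; omega)
  rw [Nat.sub_mul, mul_assoc] at h
  omega

end Classification

/-- For `n` large enough and `D = {i : 1 ≤ i ≤ 2^{n+1} − 3, i odd}`:
(a) no irreducible solution has density strictly between `1/n` and `2/(2n−1)`;
(b) the irreducible solutions of density exactly `2/(2n−1)` (necessarily of weight 2
and length `2n−1`) are exactly, up to shift, `2^{n−1}·(2^n − 3) + 1·(3·2^{n−1} − 1)`
and, for `i ∈ {3,5,7}`, `2^{n−2}·(2^{n+1} − i) + 1·(i·2^{n−2} − 1)`. -/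
theorem density_two_over_2n_sub_one_solutions :
    ∃ N : ℕ, ∀ n : ℕ, N ≤ n →
      (∀ ℓ U, IsSolution (oddD n) ℓ U → IrreducibleSol (oddD n) ℓ U →
        ¬(ℓ < n * weight (oddD n) U ∧ (2 * n - 1) * weight (oddD n) U < 2 * ℓ)) ∧
      (IsSolution (oddD n) (2 * n - 1) (sol2 (2 ^ n - 3) (2 ^ (n - 1)) (3 * 2 ^ (n - 1) - 1) 1) ∧
        IrreducibleSol (oddD n) (2 * n - 1) (sol2 (2 ^ n - 3) (2 ^ (n - 1)) (3 * 2 ^ (n - 1) - 1) 1) ∧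
        weight (oddD n) (sol2 (2 ^ n - 3) (2 ^ (n - 1)) (3 * 2 ^ (n - 1) - 1) 1) = 2) ∧
      (∀ i ∈ ({3, 5, 7} : Finset ℕ),
        IsSolution (oddD n) (2 * n - 1) (sol2 (2 ^ (n + 1) - i) (2 ^ (n - 2)) (i * 2 ^ (n - 2) - 1) 1) ∧
        IrreducibleSol (oddD n) (2 * n - 1) (sol2 (2 ^ (n + 1) - i) (2 ^ (n - 2)) (i * 2 ^ (n - 2) - 1) 1) ∧
        weight (oddD n) (sol2 (2 ^ (n + 1) - i) (2 ^ (n - 2)) (i * 2 ^ (n - 2) - 1) 1) = 2) ∧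
      (∀ ℓ U, IsSolution (oddD n) ℓ U → IrreducibleSol (oddD n) ℓ U →
        (2 * n - 1) * weight (oddD n) U = 2 * ℓ →
        ℓ = 2 * n - 1 ∧ weight (oddD n) U = 2 ∧
          (IsShiftOf ℓ U (sol2 (2 ^ n - 3) (2 ^ (n - 1)) (3 * 2 ^ (n - 1) - 1) 1) ∨
            ∃ i ∈ ({3, 5, 7} : Finset ℕ),
              IsShiftOf ℓ U (sol2 (2 ^ (n + 1) - i) (2 ^ (n - 2)) (i * 2 ^ (n - 2) - 1) 1))) := by
  refine ⟨7, fun n hn => ⟨?_, ?_, ?_, ?_⟩⟩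
  · rintro ℓ U h hirr ⟨hlt, hle⟩
    obtain ⟨hw, rfl, -⟩ :=
      h.weight_eq_two_and_length_eq hn (fun _ => odd_and_lt_of_mem_oddD) hirr hlt hle.le
    rw [hw] at hle
    omega
  · have hparams : ExtremalParams n n (n - 1) 3 := .inl ⟨rfl, by omega, rfl⟩
    exact hparams.isSolution_and_irreducibleSol_and_weight_eq_two (by omega)
  · intro i hi
    have hparams : ExtremalParams n (n + 1) (n - 2) i := .inr ⟨rfl, by omega, hi⟩
    exact hparams.isSolution_and_irreducibleSol_and_weight_eq_two (by omega)
  · intro ℓ U h hirr heq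
    obtain ⟨hw, rfl, k, hk, hone⟩ := h.weight_eq_two_and_length_eq hn
      (fun _ => odd_and_lt_of_mem_oddD) hirr (lt_mul_of_two_mul_sub_one_mul_eq h.len_pos heq) heq.le
    obtain ⟨s, t, i, ⟨rfl, ht, rfl⟩ | ⟨rfl, ht, hi⟩, hshift⟩ :=
      h.exists_extremalParams_isShiftOf (by omega) hirr hw hk hone
    · obtain rfl : t = s - 1 := by omega
      exact ⟨rfl, hw, .inl hshift⟩
    · obtain rfl : t = n - 2 := by omega
      exact ⟨rfl, hw, .inr ⟨i, hi, hshift⟩⟩
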